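/- arXiv:1605.00818 — 2 statements merged into one kernel-verified Lean document; each statement's English description precedes it below -/
import Mathlib

section
/- Let k ≥ 3, v = 2k+1, and let F be a graph that is a vertex-disjoint union of two cycles of length k with vertices in (Z_k × Z_2) ∪ {∞} satisfying: (i) V(F) = ((Z_k × Z_2) ∪ {∞}) \ {(a,b)} for some (a,b) ∈ Z_k × Z_2; (ii) ∞ has one neighbor in Z_k × {0} and its other neighbor in Z_k × {1}; (iii) Δ_{(0,0)}F ⊇ Z_k \ {0}, Δ_{(0,1)}F ⊇ Z_k, and Δ_{(1,1)}F ⊇ Z_k \ {0, d, −d}, where d is an integer with gcd(d, k) = 1. Then there exists a k-ARCS(2k+1). -/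
open SimpleGraph

/-- `F` is a `C_k`-factor of `H`: a spanning subgraph of `H` that is 2-regular
and each of whose connected components has exactly `k` vertices. -/
def IsCycleFactor {V : Type*} (H F : SimpleGraph V) (k : ℕ) : Prop :=
  F ≤ H ∧ (∀ v, (F.neighborSet v).ncard = 2) ∧
    ∀ v : V, {w | F.Reachable v w}.ncard = k

/-- The family of graphs `F` partitions the edge set of `H`. -/
def IsDecomp {V ι : Type*} (H : SimpleGraph V) (F : ι → SimpleGraph V) : Prop :=
  (Pairwise fun i j => Disjoint (F i).edgeSet (F j).edgeSet) ∧
  ∀ e, e ∈ H.edgeSet ↔ ∃ i, e ∈ (F i).edgeSet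

/-- `HW H m n α β`: the edge set of `H` can be partitioned into
`α` `C_m`-factors and `β` `C_n`-factors. -/
def HW {V : Type*} (H : SimpleGraph V) (m n α β : ℕ) : Prop :=
  ∃ F : Fin α ⊕ Fin β → SimpleGraph V,
    (∀ i, IsCycleFactor H (F (Sum.inl i)) m) ∧
    (∀ j, IsCycleFactor H (F (Sum.inr j)) n) ∧
    IsDecomp H F

/-- `(α, β) ∈ HWP(v; m, n)` for odd `v`: `K_v` has a 2-factorization into
`α` `C_m`-factors and `β` `C_n`-factors. -/
def HWPodd (v m n α β : ℕ) : Prop := HW (⊤ : SimpleGraph (Fin v)) m n α β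

/-- `F ≤ H` is a vertex-disjoint union of `c` cycles of length `k`:
2-regular on its support, every component has `k` vertices, and the support
has `k * c` vertices. -/
def IsCycleClass {V : Type*} (H F : SimpleGraph V) (k c : ℕ) : Prop :=
  F ≤ H ∧ (∀ v ∈ F.support, (F.neighborSet v).ncard = 2) ∧
  (∀ v ∈ F.support, {w | F.Reachable v w}.ncard = k) ∧
  F.support.ncard = k * c

/-- An almost resolvable `k`-cycle system of order `v`: a partition of the
edges of `K_v` into `(v-1)/2` almost parallel classes (each a vertex-disjoint
union of `(v-1)/k` `k`-cycles) together with one half-parallel class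
(a vertex-disjoint union of `(v-1)/(2k)` `k`-cycles). -/
def IsARCS (k v : ℕ) : Prop :=
  ∃ F : Fin ((v - 1) / 2) ⊕ Unit → SimpleGraph (Fin v),
    (∀ i, IsCycleClass ⊤ (F (Sum.inl i)) k ((v - 1) / k)) ∧
    (∀ j, IsCycleClass ⊤ (F (Sum.inr j)) k ((v - 1) / (2 * k))) ∧
    IsDecomp (⊤ : SimpleGraph (Fin v)) F

/-- The lexicographic product `C_m[n]` of the cycle `C_m` with the empty graph
on `n` vertices, on vertex set `ZMod m × ZMod n`. -/
def lexCycle (m n : ℕ) : SimpleGraph (ZMod m × ZMod n) :=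
  SimpleGraph.fromRel (fun a b => a.1 - b.1 = 1)

/-- The Cayley graph of an additive group with connection set `S`. -/
def cayley {Γ : Type*} [AddGroup Γ] (S : Set Γ) : SimpleGraph Γ :=
  SimpleGraph.fromRel (fun a b => a - b ∈ S)

/-!
Translating `F` by the `k` elements of `ℤ_k`, fixing `∞`, gives `k` almost parallel classes. By the
difference conditions the translates cover all edges of `K_{2k+1}`, except perhaps the edges of
difference `±d` inside `ℤ_k × {1}`; as `d` generates `ℤ_k`, these form a single `k`-cycle, which is
the half-parallel class. The classes have `k · 2k + k = (2k+1).choose 2` edges in total, so a family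
of classes that covers `K_{2k+1}` automatically partitions it.
-/

section Counting

theorem pairwise_disjoint_of_sum_ncard_le_ncard_iUnion {α ι : Type*} [Fintype ι] {s : ι → Set α}
    (hs : ∀ i, (s i).Finite) (hcard : ∑ i, (s i).ncard ≤ (⋃ i, s i).ncard) :
    Pairwise fun i j => Disjoint (s i) (s j) := by
  have : ∀ i, Finite (s i) := hs
  have hbij : Function.Bijective (Set.sigmaToiUnion s) := by
    refine (Set.sigmaToiUnion_surjective s).bijective_of_nat_card_le ?_
    simpa only [Nat.card_sigma, Nat.card_coe_set_eq] using hcard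
  intro i j hij
  refine Set.disjoint_left.2 fun x hxi hxj => hij ?_
  exact congrArg Sigma.fst (a₁ := ⟨i, x, hxi⟩) (a₂ := ⟨j, x, hxj⟩) (hbij.injective rfl)

variable {V ι : Type*} [Finite V] {H : SimpleGraph V} {k : ℕ}

theorem isDecomp_of_sum_ncard_edgeSet_le [Fintype ι] {F : ι → SimpleGraph V} (hle : ∀ i, F i ≤ H)
    (hcover : ∀ u w, H.Adj u w → ∃ i, (F i).Adj u w)
    (hcard : ∑ i, (F i).edgeSet.ncard ≤ H.edgeSet.ncard) : IsDecomp H F := by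
  have hunion : H.edgeSet = ⋃ i, (F i).edgeSet := by
    ext ⟨u, w⟩
    rw [Set.mem_iUnion]
    exact ⟨hcover u w, fun ⟨i, hi⟩ => hle i hi⟩
  refine ⟨?_, fun e => by rw [hunion, Set.mem_iUnion]⟩
  exact pairwise_disjoint_of_sum_ncard_le_ncard_iUnion (fun i => Set.toFinite _) (hunion ▸ hcard)

theorem ncard_edgeSet_top : (⊤ : SimpleGraph V).edgeSet.ncard = (Nat.card V).choose 2 := by
  classical
  have := Fintype.ofFinite V
  rw [Set.ncard_eq_toFinset_card', Nat.card_eq_fintype_card]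
  exact card_edgeFinset_top_eq_card_choose_two

theorem IsCycleClass.ncard_edgeSet {G : SimpleGraph V} {c : ℕ} (hG : IsCycleClass H G k c) :
    G.edgeSet.ncard = k * c := by
  classical
  have := Fintype.ofFinite V
  obtain ⟨-, hdeg, -, hsupport⟩ := hG
  have hdegree : ∀ v ∈ G.support.toFinset, G.degree v = 2 := fun v hv => by
    rw [← hdeg v (Set.mem_toFinset.1 hv), ← card_neighborSet_eq_degree, Set.ncard_eq_toFinset_card',
      Set.toFinset_card]
  have hhandshake := G.sum_degrees_support_eq_twice_card_edges
  rw [Finset.sum_congr rfl hdegree, Finset.sum_const, smul_eq_mul, mul_comm,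
    ← Set.ncard_eq_toFinset_card', hsupport] at hhandshake
  rw [Set.ncard_eq_toFinset_card']
  exact (Nat.eq_of_mul_eq_mul_left two_pos hhandshake).symm

theorem isDecomp_of_isCycleClass [Fintype ι] {F : ι → SimpleGraph V} {c : ι → ℕ}
    (hF : ∀ i, IsCycleClass H (F i) k (c i)) (hcover : ∀ u w, H.Adj u w → ∃ i, (F i).Adj u w)
    (hcard : ∑ i, k * c i ≤ H.edgeSet.ncard) : IsDecomp H F := by
  refine isDecomp_of_sum_ncard_edgeSet_le (fun i => (hF i).1) hcover ?_
  simpa only [(hF _).ncard_edgeSet] using hcard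

end Counting

section CycleClass

variable {V W ι κ : Type*} {H G : SimpleGraph V} {k c : ℕ}

theorem isCycleClass_of_preconnected (hconn : G.Preconnected)
    (hdeg : ∀ v, (G.neighborSet v).ncard = 2) : IsCycleClass G G (Nat.card V) 1 := by
  have hsupport : G.support = Set.univ := Set.eq_univ_of_forall fun v =>
    Set.nonempty_of_ncard_ne_zero (s := G.neighborSet v) (by rw [hdeg v]; exact two_ne_zero)
  refine ⟨le_rfl, fun v _ => hdeg v, fun v _ => ?_, ?_⟩
  · rw [← Set.ncard_univ]
    exact congrArg Set.ncard (Set.eq_univ_of_forall (hconn v))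
  · rw [hsupport, Set.ncard_univ, mul_one]

theorem setOf_reachable_map (f : V ↪ W) (G : SimpleGraph V) (v : V) :
    {w | (G.map f).Reachable (f v) w} = f '' {w | G.Reachable v w} := by
  ext w
  constructor
  · intro (h : (G.map f).Reachable (f v) w)
    rw [reachable_iff_reflTransGen] at h
    induction h with
    | refl => exact ⟨v, .rfl, rfl⟩
    | tail _ hadj ih =>
      obtain ⟨x, hx, rfl⟩ := ih
      obtain ⟨x', y, hxy, hx', rfl⟩ := (map_adj f G _ _).1 hadj
      obtain rfl := f.injective hx'
      exact ⟨y, hx.trans hxy.reachable, rfl⟩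
  · rintro ⟨x, hx, rfl⟩
    exact hx.map (Embedding.map f G).toHom

theorem IsCycleClass.mono {H' : SimpleGraph V} (hH : H ≤ H') (hG : IsCycleClass H G k c) :
    IsCycleClass H' G k c :=
  ⟨hG.1.trans hH, hG.2⟩

theorem IsCycleClass.map (hG : IsCycleClass H G k c) (f : V ↪ W) :
    IsCycleClass (H.map f) (G.map f) k c := by
  obtain ⟨hle, hdeg, hcomp, hcard⟩ := hG
  refine ⟨map_monotone f hle, ?_, ?_, ?_⟩ <;> rw [support_map]
  · rintro _ ⟨v, hv, rfl⟩
    rw [neighborSet_map, Set.ncard_image_of_injective _ f.injective, hdeg v hv]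
  · rintro _ ⟨v, hv, rfl⟩
    rw [setOf_reachable_map, Set.ncard_image_of_injective _ f.injective, hcomp v hv]
  · rw [Set.ncard_image_of_injective _ f.injective, hcard]

theorem IsDecomp.map {F : ι → SimpleGraph V} (hF : IsDecomp H F) (f : V ↪ W) :
    IsDecomp (H.map f) fun i => (F i).map f := by
  obtain ⟨hdisjoint, hcover⟩ := hF
  constructor
  · intro i j hij
    simp only [edgeSet_map]
    exact (Set.disjoint_image_iff f.sym2Map.injective).2 (hdisjoint hij)
  · intro e
    simp only [edgeSet_map, Set.mem_image, hcover]
    tauto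

theorem IsDecomp.comp_equiv {F : ι → SimpleGraph V} (hF : IsDecomp H F) (σ : κ ≃ ι) :
    IsDecomp H (F ∘ σ) :=
  ⟨fun _ _ hij => hF.1 (σ.injective.ne hij), fun e => (hF.2 e).trans σ.surjective.exists⟩

theorem isARCS_of_isDecomp [Finite V] [Finite ι] {v : ℕ} (hV : Nat.card V = v)
    (hι : Nat.card ι = (v - 1) / 2) {P : ι → SimpleGraph V} {Q : SimpleGraph V}
    (hP : ∀ i, IsCycleClass ⊤ (P i) k ((v - 1) / k))
    (hQ : IsCycleClass ⊤ Q k ((v - 1) / (2 * k)))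
    (hdecomp : IsDecomp ⊤ (Sum.elim P fun _ : Unit => Q)) : IsARCS k v := by
  let e : V ≃ Fin v := Finite.equivFinOfCardEq hV
  let σ : Fin ((v - 1) / 2) ≃ ι := (Finite.equivFinOfCardEq hι).symm
  have htop : (⊤ : SimpleGraph V).map e.toEmbedding = ⊤ := by
    rw [← comap_symm]
    exact comap_top e.symm.injective
  have hdecomp' := (hdecomp.map e.toEmbedding).comp_equiv (σ.sumCongr (.refl Unit))
  rw [htop] at hdecomp'
  exact ⟨_, fun i => ((hP (σ i)).map e.toEmbedding).mono le_top,
    fun _ => (hQ.map e.toEmbedding).mono le_top, hdecomp'⟩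

theorem isARCS_of_forall_exists_adj [Finite V] [Finite ι] (hk : k ≠ 0)
    (hV : Nat.card V = 2 * k + 1) (hι : Nat.card ι = k) {P : ι → SimpleGraph V} {Q : SimpleGraph V}
    (hP : ∀ i, IsCycleClass ⊤ (P i) k 2) (hQ : IsCycleClass ⊤ Q k 1)
    (hcover : ∀ u w, u ≠ w → (∃ i, (P i).Adj u w) ∨ Q.Adj u w) : IsARCS k (2 * k + 1) := by
  have := Fintype.ofFinite ι
  have hcard : ∑ i, k * Sum.elim (fun _ : ι => 2) (fun _ : Unit => 1) i
      = (⊤ : SimpleGraph V).edgeSet.ncard := calc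
    _ = k * (2 * k) + k := by
      rw [Fintype.sum_sum_type]
      simp only [Sum.elim_inl, Sum.elim_inr, Finset.sum_const, Finset.card_univ,
        ← Nat.card_eq_fintype_card, hι, Nat.card_unique, smul_eq_mul, mul_one, one_mul,
        mul_comm k 2]
    _ = (2 * k + 1).choose 2 := by
      have htwice : (2 * k + 1) * (2 * k) = 2 * (k * (2 * k) + k) := by ring
      rw [Nat.choose_two_right, Nat.add_sub_cancel, htwice, Nat.mul_div_cancel_left _ two_pos]
    _ = _ := by rw [ncard_edgeSet_top, hV]
  have hdecomp : IsDecomp ⊤ (Sum.elim P fun _ : Unit => Q) := by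
    refine isDecomp_of_isCycleClass (Sum.rec hP fun _ => hQ) (fun u w huw => ?_) hcard.le
    simpa using hcover u w huw
  refine isARCS_of_isDecomp hV (by lia) (fun i => ?_) ?_ hdecomp
  · convert hP i
    rw [Nat.add_sub_cancel, Nat.mul_div_cancel _ (by lia)]
  · convert hQ
    rw [Nat.add_sub_cancel, Nat.div_self (by lia)]

end CycleClass

section Cayley

variable {Γ : Type*} [AddGroup Γ] {d : Γ}

theorem neighborSet_cayley_singleton (hd : d ≠ 0) (x : Γ) :
    (cayley {d}).neighborSet x = {-d + x, d + x} := by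
  ext y
  have hne : y = -d + x ∨ y = d + x → x ≠ y := by
    rintro (rfl | rfl) <;> simpa [eq_comm] using hd
  have hback : x = d + y ↔ y = -d + x := eq_comm.trans eq_neg_add_iff_add_eq.symm
  simp only [cayley, mem_neighborSet, fromRel_adj, Set.mem_singleton_iff, Set.mem_insert_iff,
    sub_eq_iff_eq_add, hback]
  exact and_iff_right_of_imp hne

theorem cayley_singleton_preconnected (hd : AddSubgroup.zmultiples d = ⊤) :
    (cayley {d}).Preconnected := by
  have hstep : ∀ x, (cayley {d}).Reachable x (d + x) := fun x => by
    by_cases hxy : x = d + x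
    · rw [← hxy]
    · exact Adj.reachable ⟨hxy, .inr (add_sub_cancel_right d x)⟩
  have hmultiple : ∀ (n : ℤ) x, (cayley {d}).Reachable x (n • d + x) := fun n x => by
    induction n with
    | zero => simp
    | succ n ih =>
      rw [add_comm (n : ℤ), add_zsmul, one_zsmul, add_assoc]
      exact ih.trans (hstep _)
    | pred n ih =>
      refine ih.trans (Reachable.symm ?_)
      convert hstep ((-(n : ℤ) - 1) • d + x) using 1
      rw [← add_assoc, ← one_add_zsmul, add_sub_cancel]
  intro x y
  obtain ⟨n, hn⟩ : y - x ∈ AddSubgroup.zmultiples d := hd ▸ AddSubgroup.mem_top _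
  simpa [show n • d = y - x from hn] using hmultiple n x

theorem isCycleClass_cayley_singleton (hd : AddSubgroup.zmultiples d = ⊤)
    (hcard : 2 < Nat.card Γ) : IsCycleClass ⊤ (cayley {d}) (Nat.card Γ) 1 := by
  have horder : addOrderOf d = Nat.card Γ := by
    rw [← Nat.card_zmultiples, hd, AddSubgroup.card_top]
  have htwo : d + d ≠ 0 := by
    rw [← two_nsmul]
    exact nsmul_ne_zero_of_lt_addOrderOf two_ne_zero (horder ▸ hcard)
  have hne : d ≠ 0 := fun h => htwo (by rw [h, add_zero])
  refine (isCycleClass_of_preconnected (cayley_singleton_preconnected hd) fun x => ?_).mono le_top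
  rw [neighborSet_cayley_singleton hne, Set.ncard_pair]
  exact fun h => htwo (neg_eq_iff_add_eq_zero.1 (add_right_cancel h))

theorem zmultiples_eq_top_of_isUnit {k : ℕ} {u : ZMod k} (hu : IsUnit u) :
    AddSubgroup.zmultiples u = ⊤ := by
  refine (AddSubgroup.eq_top_iff' _).2 fun y => ?_
  obtain ⟨v, hv⟩ := hu.exists_left_inv
  obtain ⟨n, hn⟩ := ZMod.intCast_surjective (y * v)
  exact ⟨n, by simp [hn, mul_assoc, hv]⟩

end Cayley

section Translates

variable {Γ I : Type*} [AddGroup Γ]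

/-- The translation `(x, i) ↦ (x + g, i)` of the points of `Γ × I`, fixing the point `none`, which
plays the role of `∞`. -/
def pointShift (g : Γ) : Option (Γ × I) ≃ Option (Γ × I) :=
  ((Equiv.addRight g).prodCongr (.refl I)).optionCongr

theorem pointShift_some (g x : Γ) (i : I) : pointShift g (some (x, i)) = some (x + g, i) := rfl

/-- The translate `F + g` of a graph `F` on the points of `Γ × I` together with `∞`. -/
def graphTranslate (F : SimpleGraph (Option (Γ × I))) (g : Γ) : SimpleGraph (Option (Γ × I)) :=
  F.map (pointShift g).toEmbedding

/-- The set of elements of the list `Δ_{(i, j)} F` of `(i, j)`-differences of `F`; multiplicities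
are not recorded. -/
def differences (F : SimpleGraph (Option (Γ × I))) (i j : I) : Set Γ :=
  {z | ∃ x y, F.Adj (some (x, i)) (some (y, j)) ∧ x - y = z}

/-- The inclusion of `Γ` as the layer `Γ × {i}` of the points. -/
def layer (Γ : Type*) {I : Type*} (i : I) : Γ ↪ Option (Γ × I) :=
  (Function.Embedding.sectL Γ i).trans .some

variable {F : SimpleGraph (Option (Γ × I))} {i j : I}

theorem exists_graphTranslate_adj_none {x : Γ} (h : F.Adj none (some (x, i))) (z : Γ) :
    ∃ g, (graphTranslate F g).Adj none (some (z, i)) := by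
  refine ⟨-x + z, (map_adj _ _ _ _).2 ⟨_, _, h, rfl, ?_⟩⟩
  exact (pointShift_some _ x i).trans (by rw [add_neg_cancel_left])

theorem exists_graphTranslate_adj_of_sub_mem_differences {z w : Γ}
    (h : z - w ∈ differences F i j) :
    ∃ g, (graphTranslate F g).Adj (some (z, i)) (some (w, j)) := by
  obtain ⟨x, y, hadj, hxy⟩ := h
  have hw : y + (-x + z) = w := by
    rw [← add_assoc, ← sub_eq_add_neg, ← neg_sub, hxy, neg_sub, sub_add_cancel]
  refine ⟨-x + z, (map_adj _ _ _ _).2 ⟨_, _, hadj, ?_, ?_⟩⟩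
  · exact (pointShift_some _ x i).trans (by rw [add_neg_cancel_left])
  · exact (pointShift_some _ y j).trans (by rw [hw])

theorem exists_graphTranslate_adj_or_cayley_adj {F : SimpleGraph (Option (Γ × ZMod 2))} {S : Set Γ}
    (hnone : ∀ i, ∃ x, F.Adj none (some (x, i)))
    (h00 : ∀ z ≠ 0, z ∈ differences F 0 0) (h01 : ∀ z, z ∈ differences F 0 1)
    (h11 : ∀ z ≠ 0, z ∉ S → -z ∉ S → z ∈ differences F 1 1)
    {u w : Option (Γ × ZMod 2)} (huw : u ≠ w) :
    (∃ g, (graphTranslate F g).Adj u w) ∨ ((cayley S).map (layer Γ (1 : ZMod 2))).Adj u w := by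
  have hcover_none : ∀ p : Γ × ZMod 2, ∃ g, (graphTranslate F g).Adj none (some p) := fun (z, i) =>
    have ⟨_, hx⟩ := hnone i
    exists_graphTranslate_adj_none hx z
  have hcover_01 : ∀ z w, ∃ g, (graphTranslate F g).Adj (some (z, 0)) (some (w, 1)) := fun z w =>
    exists_graphTranslate_adj_of_sub_mem_differences (h01 (z - w))
  rcases u with _ | ⟨z, i⟩ <;> rcases w with _ | ⟨w, j⟩
  · exact absurd rfl huw
  · exact .inl (hcover_none _)
  · exact .inl ((hcover_none _).imp fun _ h => h.symm)
  have hsub : i = j → z - w ≠ 0 := fun hij h => huw (by rw [hij, sub_eq_zero.1 h])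
  fin_cases i <;> fin_cases j
  · exact .inl (exists_graphTranslate_adj_of_sub_mem_differences (h00 _ (hsub rfl)))
  · exact .inl (hcover_01 z w)
  · exact .inl ((hcover_01 w z).imp fun _ h => h.symm)
  by_cases hS : z - w ∈ S ∨ w - z ∈ S
  · have hadj : (cayley S).Adj z w := ⟨sub_ne_zero.1 (hsub rfl), hS⟩
    exact .inr ((map_adj_apply (f := layer Γ (1 : ZMod 2))).2 hadj)
  · rw [not_or, ← neg_sub z w] at hS
    exact .inl (exists_graphTranslate_adj_of_sub_mem_differences (h11 _ (hsub rfl) hS.1 hS.2))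

end Translates

theorem stmt3 (k : ℕ) (hk : 3 ≤ k) (d : ℤ) (hd : Int.gcd d k = 1)
    (F : SimpleGraph (Option (ZMod k × ZMod 2)))
    (hF : (∀ v ∈ F.support, (F.neighborSet v).ncard = 2) ∧
      (∀ v ∈ F.support, {w | F.Reachable v w}.ncard = k) ∧
      F.support.ncard = 2 * k)
    (hi : ∃ (a : ZMod k) (b : ZMod 2), F.support = {x | x ≠ some (a, b)})
    (hii : ∃ x y : ZMod k, F.Adj none (some (x, 0)) ∧ F.Adj none (some (y, 1)))
    (hiii00 : ∀ z : ZMod k, z ≠ 0 →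
      ∃ x y : ZMod k, F.Adj (some (x, 0)) (some (y, 0)) ∧ x - y = z)
    (hiii01 : ∀ z : ZMod k,
      ∃ x y : ZMod k, F.Adj (some (x, 0)) (some (y, 1)) ∧ x - y = z)
    (hiii11 : ∀ z : ZMod k, z ≠ 0 → z ≠ (d : ZMod k) → z ≠ -(d : ZMod k) →
      ∃ x y : ZMod k, F.Adj (some (x, 1)) (some (y, 1)) ∧ x - y = z) :
    IsARCS k (2 * k + 1) := by
  have : NeZero k := ⟨by lia⟩
  have hV : Nat.card (Option (ZMod k × ZMod 2)) = 2 * k + 1 := by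
    rw [Finite.card_option, Nat.card_prod, Nat.card_zmod, Nat.card_zmod, mul_comm]
  have hd_unit : IsUnit (d : ZMod k) :=
    (ZMod.coe_int_isUnit_iff_isCoprime d k).2 (Int.isCoprime_iff_gcd_eq_one.2 hd).symm
  have hhalf : IsCycleClass ⊤ (cayley {(d : ZMod k)}) k 1 := by
    simpa only [Nat.card_zmod] using isCycleClass_cayley_singleton
      (zmultiples_eq_top_of_isUnit hd_unit) (by rw [Nat.card_zmod]; lia)
  have hFclass : IsCycleClass ⊤ F k 2 := ⟨le_top, hF.1, hF.2.1, hF.2.2.trans (mul_comm 2 k)⟩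
  refine isARCS_of_forall_exists_adj (NeZero.ne k) hV (Nat.card_zmod k)
    (fun g => (hFclass.map (pointShift g).toEmbedding).mono le_top)
    ((hhalf.map (layer (ZMod k) (1 : ZMod 2))).mono le_top) fun u w huw => ?_
  refine exists_graphTranslate_adj_or_cayley_adj ?_ hiii00 hiii01 (fun z hz hzd hzd' => ?_) huw
  · obtain ⟨x, y, hx, hy⟩ := hii
    intro i
    fin_cases i
    exacts [⟨x, hx⟩, ⟨y, hy⟩]
  · exact hiii11 z hz hzd fun h => hzd' (neg_eq_iff_eq_neg.2 h)
end

section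
/- For every integer k ≥ 9 with k ≡ 1 (mod 4), there exists a k-ARCS(6k+1), i.e. an almost resolvable k-cycle system of order 6k+1. -/
open SimpleGraph

/-!
Take as vertices two copies of a finite group `G` of order `k m` and a point fixed by `G`,
and let `g : G` have order `k`. Suppose `2 m` cycles of length `k` cover all vertices but one, join
the fixed point to both copies, and realize every difference within or between the copies except
`± g` in the first one. By counting they are disjoint, and their translates cover all edges but
those of difference `± g` in the first copy. These form `m` cycles of length `k`, one on each coset
of `⟨g⟩`. As many edges are used as the complete graph has, so the covering is a partition.

For `k = 4 K + 9`, `m = 3` and `g = 3`, such cycles are given by explicit formulas. They consist of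
zigzags `x, y, x + 1, y - 1, …`, which realize intervals of differences, and of boundedly many other
edges, so that all conditions become linear arithmetic in `K`.
-/

section CycleUnion

variable {V W J : Type*} {k : ℕ}

/-- The edges of the closed walks `c j`, whose steps are indexed by the cyclic group `ZMod k`. -/
def cycleEdges (c : J → ZMod k → V) : Set (Sym2 V) :=
  Set.range fun q : J × ZMod k => s(c q.1 q.2, c q.1 (q.2 + 1))

/-- The graph formed by the closed walks `c j`. It is a vertex-disjoint union of `k`-cycles when
`c` is injective in both arguments jointly and `3 ≤ k`. -/
def cycleUnion (c : J → ZMod k → V) : SimpleGraph V :=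
  SimpleGraph.fromEdgeSet (cycleEdges c)

theorem map_mem_cycleEdges (f : V → W) {c : J → ZMod k → V} {e : Sym2 V}
    (he : e ∈ cycleEdges c) : e.map f ∈ cycleEdges fun j t => f (c j t) := by
  obtain ⟨q, rfl⟩ := he
  exact ⟨q, rfl⟩

theorem ncard_edgeSet_cycleUnion_le [Finite J] [NeZero k] (c : J → ZMod k → V) :
    (cycleUnion c).edgeSet.ncard ≤ Nat.card J * k := by
  calc (cycleUnion c).edgeSet.ncard
      ≤ (cycleEdges c).ncard := by
        rw [cycleUnion, SimpleGraph.edgeSet_fromEdgeSet]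
        exact Set.ncard_le_ncard Set.sdiff_subset (Set.finite_range _)
    _ ≤ Nat.card (J × ZMod k) := by
        rw [cycleEdges, ← Nat.card_coe_set_eq]
        exact Finite.card_range_le _
    _ = Nat.card J * k := by rw [Nat.card_prod, Nat.card_zmod]

variable {c : J → ZMod k → V}

theorem cycleUnion_adj_iff (hk : 1 < k) (hc : Function.Injective2 c) {j : J} {t : ZMod k} {w : V} :
    (cycleUnion c).Adj (c j t) w ↔ w = c j (t + 1) ∨ w = c j (t - 1) := by
  have : Fact (1 < k) := ⟨hk⟩
  rw [cycleUnion, SimpleGraph.fromEdgeSet_adj]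
  constructor
  · rintro ⟨⟨⟨j', t'⟩, h⟩, -⟩
    rcases Sym2.eq_iff.1 h with ⟨hu, hw⟩ | ⟨hw, hu⟩
    · obtain ⟨rfl, rfl⟩ := hc hu
      exact Or.inl hw.symm
    · obtain ⟨rfl, rfl⟩ := hc hu
      exact Or.inr (by simpa using hw.symm)
  · rintro (rfl | rfl)
    · exact ⟨⟨(j, t), rfl⟩, fun h => by simpa using (hc h).2⟩
    · exact ⟨⟨(j, t - 1), by simp [Sym2.eq_swap]⟩,
        fun h => by simpa [eq_sub_iff_add_eq] using (hc h).2⟩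

theorem support_cycleUnion (hk : 1 < k) (hc : Function.Injective2 c) :
    (cycleUnion c).support = Set.range (Function.uncurry c) := by
  ext v
  constructor
  · rintro ⟨w, h⟩
    obtain ⟨⟨⟨j, t⟩, h⟩, -⟩ := (SimpleGraph.fromEdgeSet_adj _).1 h
    rcases Sym2.eq_iff.1 h with ⟨rfl, -⟩ | ⟨-, rfl⟩
    exacts [⟨(j, t), rfl⟩, ⟨(j, t + 1), rfl⟩]
  · rintro ⟨⟨j, t⟩, rfl⟩
    exact ⟨c j (t + 1), (cycleUnion_adj_iff hk hc).2 (Or.inl rfl)⟩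

theorem neighborSet_cycleUnion (hk : 1 < k) (hc : Function.Injective2 c) (j : J) (t : ZMod k) :
    (cycleUnion c).neighborSet (c j t) = {c j (t + 1), c j (t - 1)} :=
  Set.ext fun _ => cycleUnion_adj_iff hk hc

theorem setOf_reachable_cycleUnion (hk : 1 < k) (hc : Function.Injective2 c) (j : J)
    (t : ZMod k) : {w | (cycleUnion c).Reachable (c j t) w} = Set.range (c j) := by
  have : NeZero k := ⟨by omega⟩
  ext w
  constructor
  · intro h
    induction (SimpleGraph.reachable_iff_reflTransGen _ _).1 h with
    | refl => exact ⟨t, rfl⟩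
    | tail hr hadj ih =>
      obtain ⟨s, rfl⟩ := ih ((SimpleGraph.reachable_iff_reflTransGen _ _).2 hr)
      rcases (cycleUnion_adj_iff hk hc).1 hadj with rfl | rfl <;> exact ⟨_, rfl⟩
  · rintro ⟨s, rfl⟩
    have reach (i : ℕ) : (cycleUnion c).Reachable (c j t) (c j (t + i)) := by
      induction i with
      | zero => simp
      | succ i ih =>
        refine ih.trans (SimpleGraph.Adj.reachable ((cycleUnion_adj_iff hk hc).2 (Or.inl ?_)))
        rw [Nat.cast_succ, add_assoc]
    simpa using reach (s - t).val

theorem zmod_add_one_ne_sub_one (hk : 3 ≤ k) (t : ZMod k) : t + 1 ≠ t - 1 := by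
  intro h
  have two_eq_zero : ((2 : ℕ) : ZMod k) = 0 := by
    push_cast
    linear_combination h
  have := Nat.le_of_dvd two_pos ((ZMod.natCast_eq_zero_iff 2 k).1 two_eq_zero)
  omega

theorem isCycleClass_cycleUnion (hk : 3 ≤ k) (hc : Function.Injective2 c) :
    IsCycleClass ⊤ (cycleUnion c) k (Nat.card J) := by
  have hk' : 1 < k := by omega
  refine ⟨le_top, ?_, ?_, ?_⟩
  · rw [support_cycleUnion hk' hc]
    rintro _ ⟨⟨j, t⟩, rfl⟩
    rw [Function.uncurry_apply_pair, neighborSet_cycleUnion hk' hc]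
    exact Set.ncard_pair fun h => zmod_add_one_ne_sub_one hk t (hc h).2
  · rw [support_cycleUnion hk' hc]
    rintro _ ⟨⟨j, t⟩, rfl⟩
    rw [Function.uncurry_apply_pair, setOf_reachable_cycleUnion hk' hc,
      Set.ncard_range_of_injective (hc.right j), Nat.card_zmod]
  · rw [support_cycleUnion hk' hc, Set.ncard_range_of_injective hc.uncurry, Nat.card_prod,
      Nat.card_zmod, mul_comm]

end CycleUnion

theorem isDecomp_top_of_card_le {V ι : Type*} [Finite V] [Fintype ι] {F : ι → SimpleGraph V}
    (hcov : ∀ e : Sym2 V, ¬ e.IsDiag → ∃ i, e ∈ (F i).edgeSet)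
    (hcard : ∑ i, (F i).edgeSet.ncard ≤ (Nat.card V).choose 2) :
    IsDecomp (⊤ : SimpleGraph V) F := by
  classical
  have := Fintype.ofFinite V
  let toEdge (x : Σ i, (F i).edgeSet) : (⊤ : SimpleGraph V).edgeSet :=
    ⟨x.2, SimpleGraph.edgeSet_mono le_top x.2.2⟩
  have surj : Function.Surjective toEdge := by
    rintro ⟨e, he⟩
    obtain ⟨i, hi⟩ := hcov e (SimpleGraph.not_isDiag_of_mem_edgeSet _ he)
    exact ⟨⟨i, e, hi⟩, rfl⟩
  have card_le : Nat.card (Σ i, (F i).edgeSet) ≤ Nat.card (⊤ : SimpleGraph V).edgeSet := by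
    rwa [Nat.card_sigma, Nat.card_eq_fintype_card (α := (⊤ : SimpleGraph V).edgeSet),
      ← SimpleGraph.edgeFinset_card, SimpleGraph.card_edgeFinset_top_eq_card_choose_two,
      ← Nat.card_eq_fintype_card]
  have inj : Function.Injective toEdge := (surj.bijective_of_nat_card_le card_le).1
  refine ⟨fun i i' hne => Set.disjoint_left.2 fun e hi hi' => hne ?_, fun e => ⟨fun he => ?_, ?_⟩⟩
  · exact congrArg Sigma.fst (@inj ⟨i, e, hi⟩ ⟨i', e, hi'⟩ rfl)
  · exact hcov e (SimpleGraph.not_isDiag_of_mem_edgeSet _ he)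
  · rintro ⟨i, hi⟩
    exact SimpleGraph.edgeSet_mono le_top hi

section ARCS

variable {V I J H : Type*} [Finite V] [Finite I] [Finite J] [Finite H] {k m : ℕ}

theorem isDecomp_sumElim_cycleUnion [NeZero k]
    (hV : Nat.card V = 2 * (k * m) + 1) (hI : Nat.card I = k * m) (hJ : Nat.card J = 2 * m)
    (hH : Nat.card H = m) {c : I → J → ZMod k → V} {h : H → ZMod k → V}
    (hcov : ∀ e : Sym2 V, ¬ e.IsDiag → (∃ i, e ∈ cycleEdges (c i)) ∨ e ∈ cycleEdges h) :
    IsDecomp ⊤ (Sum.elim (fun i => cycleUnion (c i)) fun _ : Unit => cycleUnion h) := by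
  have := Fintype.ofFinite I
  refine isDecomp_top_of_card_le (fun e he => ?_) ?_
  · rcases hcov e he with ⟨i, hi⟩ | hi
    · exact ⟨Sum.inl i, by simpa [cycleUnion] using ⟨hi, he⟩⟩
    · exact ⟨Sum.inr (), by simpa [cycleUnion] using ⟨hi, he⟩⟩
  · have choose_eq : (Nat.card V).choose 2 = k * m * (2 * m * k) + m * k := by
      rw [hV, Nat.choose_two_right, Nat.add_sub_cancel]
      exact Nat.div_eq_of_eq_mul_left two_pos (by ring)
    rw [choose_eq, Fintype.sum_sum_type]
    gcongr
    · refine (Finset.sum_le_card_nsmul _ _ _ fun i _ => ncard_edgeSet_cycleUnion_le (c i)).trans ?_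
      rw [Finset.card_univ, ← Nat.card_eq_fintype_card, hI, hJ, smul_eq_mul]
    · simpa [hH] using ncard_edgeSet_cycleUnion_le h

theorem isARCS_of_cycles (hk : 3 ≤ k) (hV : Nat.card V = 2 * (k * m) + 1)
    (hI : Nat.card I = k * m) (hJ : Nat.card J = 2 * m) (hH : Nat.card H = m)
    {c : I → J → ZMod k → V} {h : H → ZMod k → V}
    (hc : ∀ i, Function.Injective2 (c i)) (hh : Function.Injective2 h)
    (hcov : ∀ e : Sym2 V, ¬ e.IsDiag → (∃ i, e ∈ cycleEdges (c i)) ∨ e ∈ cycleEdges h) :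
    IsARCS k (2 * (k * m) + 1) := by
  have hkpos : 0 < k := by omega
  have : NeZero k := ⟨hkpos.ne'⟩
  have card_almost : (2 * (k * m) + 1 - 1) / k = Nat.card J := by
    rw [Nat.add_sub_cancel, hJ, mul_left_comm, Nat.mul_div_cancel_left _ hkpos]
  have card_half : (2 * (k * m) + 1 - 1) / (2 * k) = Nat.card H := by
    rw [Nat.add_sub_cancel, hH, ← mul_assoc, Nat.mul_div_cancel_left _ (by omega)]
  have card_classes : Nat.card I = (2 * (k * m) + 1 - 1) / 2 := by omega
  let eV : V ≃ Fin (2 * (k * m) + 1) := Finite.equivFinOfCardEq hV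
  let eI := (Finite.equivFinOfCardEq card_classes).symm
  refine ⟨Sum.elim (fun i => cycleUnion fun j t => eV (c (eI i) j t))
    fun _ => cycleUnion fun j t => eV (h j t), fun i => ?_, fun _ => ?_, ?_⟩
  · rw [card_almost]
    exact isCycleClass_cycleUnion hk fun _ _ _ _ he => hc _ (eV.injective he)
  · rw [card_half]
    exact isCycleClass_cycleUnion hk fun _ _ _ _ he => hh (eV.injective he)
  · refine isDecomp_sumElim_cycleUnion (m := m) (by simp) (by simp) hJ hH fun e he => ?_
    have he' : e = (e.map eV.symm).map eV := by simp [Sym2.map_map]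
    rw [he']
    refine (hcov (e.map eV.symm) ?_).imp ?_ (map_mem_cycleEdges eV)
    · rwa [Sym2.isDiag_map eV.symm.injective]
    · rintro ⟨i, hi⟩
      exact ⟨eI.symm i, by simpa using map_mem_cycleEdges eV hi⟩

end ARCS

section Differences

/-- Two copies, called levels, of `G` together with one additional point `none`. -/
abbrev TwoLevel (G : Type*) := Option (Fin 2 × G)

variable {G H : Type*}

/-- The map induced on both levels by a map of the coordinates. -/
def levelMap (f : G → H) : TwoLevel G → TwoLevel H := Option.map (Prod.map id f)

theorem levelMap_injective {f : G → H} (hf : Function.Injective f) :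
    Function.Injective (levelMap f) :=
  Option.map_injective (Function.injective_id.prodMap hf)

section Add

variable [Add G] {ℓ ℓ' : Fin 2} {d : G}

/-- The edge set `E` contains an edge joining some `x` on level `ℓ` to `x + d` on level `ℓ'`. -/
def HasDiff (E : Set (Sym2 (TwoLevel G))) (ℓ ℓ' : Fin 2) (d : G) : Prop :=
  ∃ x, s(some (ℓ, x), some (ℓ', x + d)) ∈ E

theorem HasDiff.mono {E E' : Set (Sym2 (TwoLevel G))} (h : E ⊆ E') (hE : HasDiff E ℓ ℓ' d) :
    HasDiff E' ℓ ℓ' d :=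
  hE.imp fun _ hx => h hx

theorem hasDiff_insert {e : Sym2 (TwoLevel G)} {E : Set (Sym2 (TwoLevel G))} :
    HasDiff (insert e E) ℓ ℓ' d ↔ HasDiff {e} ℓ ℓ' d ∨ HasDiff E ℓ ℓ' d := by
  simp only [HasDiff, Set.mem_insert_iff, Set.mem_singleton_iff, exists_or]

theorem not_hasDiff_empty : ¬ HasDiff (∅ : Set (Sym2 (TwoLevel G))) ℓ ℓ' d := by
  simp [HasDiff]

theorem not_hasDiff_singleton_none_left {v : TwoLevel G} : ¬ HasDiff {s(none, v)} ℓ ℓ' d := by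
  simp [HasDiff]

theorem not_hasDiff_singleton_none_right {v : TwoLevel G} : ¬ HasDiff {s(v, none)} ℓ ℓ' d := by
  simp [HasDiff]

end Add

theorem HasDiff.map [AddZeroClass G] [AddZeroClass H] {E : Set (Sym2 (TwoLevel G))} {ℓ ℓ' : Fin 2}
    {d : G} (h : HasDiff E ℓ ℓ' d) (f : G →+ H) :
    HasDiff (Sym2.map (levelMap f) '' E) ℓ ℓ' (f d) := by
  obtain ⟨x, hx⟩ := h
  exact ⟨f x, _, hx, by simp [levelMap]⟩

theorem hasDiff_singleton [AddCommGroup G] {p q : Fin 2 × G} {ℓ ℓ' : Fin 2} {d : G} :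
    HasDiff {s(some p, some q)} ℓ ℓ' d ↔
      (ℓ = p.1 ∧ ℓ' = q.1 ∧ d = q.2 - p.2) ∨ (ℓ = q.1 ∧ ℓ' = p.1 ∧ d = p.2 - q.2) := by
  simp only [HasDiff, Set.mem_singleton_iff, Sym2.eq_iff, Option.some.injEq, Prod.ext_iff]
  grind

end Differences

section Starter

variable {G J α V : Type*} {k m : ℕ}

theorem injective_of_forall_ne_mem_range [Finite α] [Finite V] {f : α → V} {hole : V}
    (hcard : Nat.card V = Nat.card α + 1) (hf : ∀ v ≠ hole, v ∈ Set.range f) :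
    Function.Injective f := by
  have surj : Function.Surjective fun o : Option α => o.elim hole f := by
    intro v
    by_cases hv : v = hole
    · exact ⟨none, hv.symm⟩
    · obtain ⟨a, rfl⟩ := hf v hv
      exact ⟨some a, rfl⟩
  have inj := (surj.bijective_of_nat_card_le (by rw [Finite.card_option, hcard])).1
  exact fun a b hab => Option.some_injective _ (inj hab)

variable [AddGroup G]

theorem exists_injective_zmodHom {g : G} (hg : addOrderOf g = k) :
    ∃ φ : ZMod k →+ G, Function.Injective φ ∧ φ 1 = g := by
  have map_order : zmultiplesHom G g k = 0 := by
    simp [← hg, addOrderOf_nsmul_eq_zero]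
  refine ⟨ZMod.lift k ⟨zmultiplesHom G g, map_order⟩, ?_, ?_⟩
  · rw [ZMod.lift_injective]
    intro x hx
    rw [ZMod.intCast_zmod_eq_zero_iff_dvd, ← hg]
    exact addOrderOf_dvd_iff_zsmul_eq_zero.2 hx
  · simpa using ZMod.lift_coe k ⟨zmultiplesHom G g, map_order⟩ 1

/-- The closed walks on level `0` running through the cosets of the image of `φ`, in steps of
`φ 1`. -/
noncomputable def cosetCycle (φ : ZMod k →+ G) (q : G ⧸ φ.range) (t : ZMod k) : TwoLevel G :=
  some (0, q.out + φ t)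

theorem injective2_cosetCycle {φ : ZMod k →+ G} (hφ : Function.Injective φ) :
    Function.Injective2 (cosetCycle φ) := by
  intro q q' t t' h
  have h' : q.out + φ t = q'.out + φ t' := by simpa [cosetCycle] using h
  obtain rfl : q = q' := by
    rw [← q.out_eq', ← q'.out_eq', QuotientAddGroup.eq]
    refine ⟨t - t', ?_⟩
    rw [map_sub, eq_neg_add_iff_add_eq, ← add_sub_assoc, h', add_sub_cancel_right]
  exact ⟨rfl, hφ (add_left_cancel h')⟩

theorem mem_cycleEdges_cosetCycle (φ : ZMod k →+ G) (x : G) :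
    s(some (0, x), some (0, x + φ 1)) ∈ cycleEdges (cosetCycle φ) := by
  obtain ⟨⟨_, t, rfl⟩, ht⟩ := QuotientAddGroup.mk_out_eq_add φ.range x
  refine ⟨((x : G ⧸ φ.range), -t), ?_⟩
  simp [cosetCycle, ht, add_assoc]

theorem card_quotient_range [Finite G] {φ : ZMod k →+ G} (hφ : Function.Injective φ)
    (hG : Nat.card G = k * m) (hk : k ≠ 0) : Nat.card (G ⧸ φ.range) = m := by
  have card_range : Nat.card φ.range = k :=
    (Nat.card_congr (AddMonoidHom.ofInjective hφ).toEquiv).symm.trans (Nat.card_zmod k)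
  have lagrange := φ.range.card_eq_card_quotient_mul_card_addSubgroup
  rw [hG, card_range, mul_comm k] at lagrange
  exact (Nat.eq_of_mul_eq_mul_right (Nat.pos_of_ne_zero hk) lagrange).symm

/-- A family of closed walks on `TwoLevel G` missing at most one vertex, joining `none` to both
levels, and realizing every difference except possibly `± g` on level `0`. Its translates by `G` are
to be the almost parallel classes, the cosets of `⟨g⟩` on level `0` the half-parallel class. -/
structure IsStarter (g : G) (c : J → ZMod k → TwoLevel G) : Prop where
  exists_hole : ∃ hole, ∀ v ≠ hole, ∃ j t, c j t = v
  hasDiff : ∀ ℓ ℓ' d, ¬ (ℓ = ℓ' ∧ d = 0) → ¬ (ℓ = 0 ∧ ℓ' = 0 ∧ (d = g ∨ d = -g)) →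
    HasDiff (cycleEdges c) ℓ ℓ' d
  none_mem : ∀ ℓ, ∃ x, s(none, some (ℓ, x)) ∈ cycleEdges c

namespace IsStarter

variable {g : G} {c : J → ZMod k → TwoLevel G}

theorem injective2 [Finite G] [Finite J] [NeZero k] (hc : IsStarter g c)
    (hcard : Nat.card (TwoLevel G) = Nat.card J * k + 1) : Function.Injective2 c := by
  obtain ⟨hole, hhole⟩ := hc.exists_hole
  have inj : Function.Injective (Function.uncurry c) := by
    refine injective_of_forall_ne_mem_range (hole := hole) ?_ fun v hv => ?_
    · rw [hcard, Nat.card_prod, Nat.card_zmod]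
    · obtain ⟨j, t, rfl⟩ := hhole v hv
      exact ⟨(j, t), rfl⟩
  intro j j' t t' h
  exact Prod.ext_iff.1 (@inj (j, t) (j', t') h)

theorem exists_translate_mem_of_hasDiff {ℓ ℓ' : Fin 2} {d : G} (h : HasDiff (cycleEdges c) ℓ ℓ' d)
    (x : G) : ∃ a, s(some (ℓ, x), some (ℓ', x + d)) ∈
      cycleEdges fun j t => levelMap (a + ·) (c j t) := by
  obtain ⟨y, hy⟩ := h
  refine ⟨x - y, ?_⟩
  simpa [levelMap, ← add_assoc]
    using map_mem_cycleEdges (levelMap (x - y + ·)) hy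

theorem exists_translate_none_mem (hc : IsStarter g c) (ℓ : Fin 2) (x : G) :
    ∃ a, s(none, some (ℓ, x)) ∈ cycleEdges fun j t => levelMap (a + ·) (c j t) := by
  obtain ⟨y, hy⟩ := hc.none_mem ℓ
  exact ⟨x - y, by simpa [levelMap] using map_mem_cycleEdges (levelMap (x - y + ·)) hy⟩

theorem mem_cycleEdges_translate_or {φ : ZMod k →+ G} (hc : IsStarter (φ 1) c)
    (e : Sym2 (TwoLevel G)) (he : ¬ e.IsDiag) :
    (∃ a : G, e ∈ cycleEdges fun j t => levelMap (a + ·) (c j t)) ∨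
      e ∈ cycleEdges (cosetCycle φ) := by
  induction e with | _ u v
  rcases u with _ | ⟨ℓ, x⟩ <;> rcases v with _ | ⟨ℓ', y⟩
  · simp at he
  · exact Or.inl (hc.exists_translate_none_mem ℓ' y)
  · rw [Sym2.eq_swap]
    exact Or.inl (hc.exists_translate_none_mem ℓ x)
  obtain ⟨d, rfl⟩ : ∃ d, y = x + d := ⟨-x + y, by rw [add_neg_cancel_left]⟩
  by_cases hg : ℓ = 0 ∧ ℓ' = 0 ∧ (d = φ 1 ∨ d = -φ 1)
  · obtain ⟨rfl, rfl, rfl | rfl⟩ := hg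
    · exact Or.inr (mem_cycleEdges_cosetCycle φ x)
    · rw [Sym2.eq_swap]
      exact Or.inr (by simpa using mem_cycleEdges_cosetCycle φ (x + -φ 1))
  · refine Or.inl (exists_translate_mem_of_hasDiff (hc.hasDiff ℓ ℓ' d ?_ hg) x)
    rintro ⟨rfl, rfl⟩
    simp at he

theorem isARCS [Finite G] [Finite J] (hk : 3 ≤ k) (hG : Nat.card G = k * m)
    (hJ : Nat.card J = 2 * m) (hg : addOrderOf g = k) (hc : IsStarter g c) :
    IsARCS k (2 * (k * m) + 1) := by
  have := Fintype.ofFinite G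
  have : NeZero k := ⟨by omega⟩
  obtain ⟨φ, hφ, rfl⟩ := exists_injective_zmodHom hg
  have hV : Nat.card (TwoLevel G) = 2 * (k * m) + 1 := by
    rw [Finite.card_option, Nat.card_prod, Nat.card_fin, hG]
  have hc_inj : Function.Injective2 c := hc.injective2 (by rw [hV, hJ]; ring)
  have translate_inj (a : G) : Function.Injective2 fun j t => levelMap (a + ·) (c j t) :=
    fun _ _ _ _ h => hc_inj (levelMap_injective (add_right_injective a) h)
  exact isARCS_of_cycles hk hV hG hJ (card_quotient_range hφ hG (NeZero.ne k)) translate_inj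
    (injective2_cosetCycle hφ) hc.mem_cycleEdges_translate_or

end IsStarter

end Starter

section PathEdges

variable {V W : Type*}

/-- The edges of the path through the successive entries of a list. -/
def pathEdges : List V → Set (Sym2 V)
  | a :: b :: l => insert s(a, b) (pathEdges (b :: l))
  | _ => ∅

/-- The edges of the cycle through the successive entries of a list. -/
def closedEdges (l : List V) : Set (Sym2 V) := pathEdges (l ++ l.take 1)

theorem pathEdges_map (f : V → W) (l : List V) :
    pathEdges (l.map f) = Sym2.map f '' pathEdges l := by
  induction l using pathEdges.induct with
  | case1 a b l ih =>
    rw [pathEdges, Set.image_insert_eq, ← ih]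
    rfl
  | case2 l hl =>
    rcases l with _ | ⟨a, _ | ⟨b, l⟩⟩
    · simp [pathEdges]
    · simp [pathEdges]
    · exact (hl a b l rfl).elim

theorem closedEdges_map (f : V → W) (l : List V) :
    closedEdges (l.map f) = Sym2.map f '' closedEdges l := by
  rw [closedEdges, closedEdges, ← pathEdges_map, List.map_append, List.map_take]

theorem exists_getElem_of_mem_pathEdges {l : List V} {e : Sym2 V} (he : e ∈ pathEdges l) :
    ∃ (i : ℕ) (h : i + 1 < l.length), e = s(l[i], l[i + 1]) := by
  induction l using pathEdges.induct with
  | case1 a b l ih =>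
    rcases he with rfl | he
    · exact ⟨0, by simp, rfl⟩
    · obtain ⟨i, hi, rfl⟩ := ih he
      exact ⟨i + 1, by simpa using hi, rfl⟩
  | case2 l hl =>
    rw [pathEdges] at he
    · exact he.elim
    · exact hl

end PathEdges

section ListCycle

variable {V J : Type*} {k : ℕ} [NeZero k]

/-- The entries of a list of length `k`, read cyclically. -/
def listCycle (l : List V) (hl : l.length = k) (t : ZMod k) : V :=
  l[t.val]'(hl ▸ t.val_lt)

theorem exists_listCycle_eq {l : List V} (hl : l.length = k) {v : V} (hv : v ∈ l) :
    ∃ t, listCycle l hl t = v := by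
  obtain ⟨i, hi, rfl⟩ := List.mem_iff_getElem.1 hv
  exact ⟨i, by simp only [listCycle, ZMod.val_natCast, Nat.mod_eq_of_lt (hl ▸ hi)]⟩

theorem closedEdges_subset_cycleEdges_listCycle (B : J → List V) (hB : ∀ j, (B j).length = k)
    (j : J) : closedEdges (B j) ⊆ cycleEdges fun j => listCycle (B j) (hB j) := by
  intro e he
  obtain ⟨i, hi, rfl⟩ := exists_getElem_of_mem_pathEdges he
  have hik : i < k := by
    have := hB j
    simp only [List.length_append, List.length_take] at hi
    omega
  refine ⟨(j, i), ?_⟩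
  have hlen : i < (B j).length := (hB j).symm ▸ hik
  simp only [listCycle, List.getElem_append_left hlen, ← Nat.cast_succ, ZMod.val_natCast,
    Nat.mod_eq_of_lt hik]
  rcases Nat.lt_or_ge (i + 1) k with h | h
  · simp [hB, h, Nat.mod_eq_of_lt h]
  · obtain rfl : k = i + 1 := by omega
    simp [hB]

end ListCycle

section Zigzag

/-- The path `p, q, p + 1, q - 1, …, p + r, q - r`, each shift keeping the level. Its differences
fill an interval. -/
def zigzag : ℕ → Fin 2 × ℤ → Fin 2 × ℤ → List (TwoLevel ℤ)
  | 0, p, q => [some p, some q]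
  | r + 1, p, q => some p :: some q :: zigzag r (p.1, p.2 + 1) (q.1, q.2 - 1)

variable (r : ℕ) (p q : Fin 2 × ℤ) (l : List (TwoLevel ℤ))

theorem length_zigzag : (zigzag r p q).length = 2 * r + 2 := by
  induction r generalizing p q with
  | zero => rfl
  | succ r ih =>
    simp only [zigzag, List.length_cons, ih]
    ring

theorem take_one_zigzag_append : (zigzag r p q ++ l).take 1 = [some p] := by
  cases r <;> rfl

theorem mem_zigzag {ℓ : Fin 2} {a : ℤ} :
    some (ℓ, a) ∈ zigzag r p q ↔
      (ℓ = p.1 ∧ p.2 ≤ a ∧ a ≤ p.2 + r) ∨ (ℓ = q.1 ∧ q.2 - r ≤ a ∧ a ≤ q.2) := by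
  induction r generalizing p q with
  | zero =>
    simp only [zigzag, List.mem_cons, List.not_mem_nil, Option.some.injEq, Prod.ext_iff,
      Nat.cast_zero]
    grind
  | succ r ih =>
    simp only [zigzag, List.mem_cons, ih, Option.some.injEq, Prod.ext_iff]
    push_cast
    grind

theorem pathEdges_cons_zigzag_append (v : TwoLevel ℤ) :
    pathEdges (v :: (zigzag r p q ++ l)) = insert s(v, some p) (pathEdges (zigzag r p q ++ l)) := by
  cases r <;> rfl

theorem pathEdges_cons_subset_zigzag_append :
    pathEdges (some (q.1, q.2 - r) :: l) ⊆ pathEdges (zigzag r p q ++ l) := by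
  induction r generalizing p q with
  | zero =>
    simp only [Nat.cast_zero, sub_zero, zigzag]
    exact Set.subset_insert _ _
  | succ r ih =>
    have tail_subset := ih (p.1, p.2 + 1) (q.1, q.2 - 1)
    rw [sub_sub, add_comm 1, ← Nat.cast_succ] at tail_subset
    rw [zigzag, List.cons_append, List.cons_append, pathEdges, pathEdges_cons_zigzag_append]
    exact tail_subset.trans ((Set.subset_insert _ _).trans (Set.subset_insert _ _))

theorem hasDiff_pathEdges_zigzag_append {ℓ ℓ' : Fin 2} {d : ℤ} :
    HasDiff (pathEdges (zigzag r p q ++ l)) ℓ ℓ' d ↔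
      (ℓ = p.1 ∧ ℓ' = q.1 ∧ q.2 - p.2 - 2 * r ≤ d ∧ d ≤ q.2 - p.2) ∨
      (ℓ = q.1 ∧ ℓ' = p.1 ∧ q.2 - p.2 - 2 * r ≤ -d ∧ -d ≤ q.2 - p.2) ∨
        HasDiff (pathEdges (some (q.1, q.2 - r) :: l)) ℓ ℓ' d := by
  induction r generalizing p q with
  | zero =>
    simp only [zigzag, List.cons_append, List.nil_append, pathEdges, hasDiff_insert,
      hasDiff_singleton, Nat.cast_zero, sub_zero]
    grind
  | succ r ih =>
    simp only [zigzag, List.cons_append, pathEdges, pathEdges_cons_zigzag_append, hasDiff_insert,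
      hasDiff_singleton, ih]
    push_cast
    grind

end Zigzag

section BaseCycle

/-- The point `x` of level `ℓ`, with the coordinate type fixed so that casts are read in `ℤ`. -/
abbrev pt (ℓ : Fin 2) (x : ℤ) : TwoLevel ℤ := some (ℓ, x)

/-- Six cycles of length `4 K + 9` whose reductions modulo `12 K + 27` form a starter for `g = 3`.
They partition the integers below `12 K + 27` on both levels and `none`, apart from `10 K + 23` on
level `0`. -/
def baseCycle (K : ℕ) : Fin 6 → List (TwoLevel ℤ)
  | 0 => zigzag K (0, 2 * K + 6) (0, 2 * K + 2) ++
      [none, pt 1 (2 * K + 4), pt 1 (6 * K + 13), pt 0 (7 * K + 16), pt 1 (2 * K + 3)] ++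
      zigzag K (1, 4 * K + 9) (1, 2 * K + 2)
  | 1 => zigzag K (0, 6 * K + 15) (0, 12 * K + 25) ++
      zigzag K (1, 2 * K + 5) (0, 5 * K + 11) ++
      [pt 1 (5 * K + 10), pt 1 (11 * K + 25), pt 0 (4 * K + 9), pt 0 0, pt 1 (9 * K + 19)]
  | 2 => zigzag K (0, 8 * K + 18) (0, 6 * K + 13) ++
      [pt 1 (4 * K + 8), pt 0 (9 * K + 20), pt 0 (3 * K + 7), pt 1 (8 * K + 17)] ++
      zigzag K (0, 7 * K + 17) (1, 10 * K + 20) ++ [pt 1 (11 * K + 24)]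
  | 3 => zigzag K (1, 8 * K + 18) (1, 4 * K + 7) ++ [pt 0 (2 * K + 5), pt 0 (2 * K + 4)] ++
      zigzag K (1, 7 * K + 16) (0, 4 * K + 8) ++
      [pt 0 (9 * K + 19), pt 0 (5 * K + 12), pt 1 (10 * K + 21)]
  | 4 => zigzag K (1, 11 * K + 26) (1, K) ++ zigzag K (1, 6 * K + 14) (0, K + 1) ++
      [pt 0 (12 * K + 26), pt 0 (6 * K + 14), pt 0 (10 * K + 22), pt 1 (3 * K + 6), pt 1 (K + 1)]
  | 5 => zigzag K (0, 9 * K + 21) (1, 6 * K + 11) ++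
      [pt 0 (4 * K + 10), pt 1 (7 * K + 15), pt 1 (11 * K + 23), pt 0 (2 * K + 3)] ++
      zigzag K (0, 10 * K + 24) (1, 11 * K + 22) ++ [pt 1 (6 * K + 12)]

theorem length_baseCycle (K : ℕ) (j : Fin 6) : (baseCycle K j).length = 4 * K + 9 := by
  fin_cases j <;> simp only [baseCycle, List.length_append, length_zigzag, List.length_cons,
    List.length_nil] <;> ring

theorem exists_mem_baseCycle (K : ℕ) (ℓ : Fin 2) (a : ℤ) (h0 : 0 ≤ a) (hn : a < 12 * K + 27)
    (hole : ¬ (ℓ = 0 ∧ a = 10 * K + 23)) : ∃ j, some (ℓ, a) ∈ baseCycle K j := by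
  simp only [Fin.exists_fin_succ, Fin.reduceSucc, Fin.succ_zero_eq_one, Fin.succ_one_eq_two,
    IsEmpty.exists_iff, baseCycle, List.mem_append, List.mem_cons, List.not_mem_nil, mem_zigzag,
    Option.some.injEq, Prod.mk.injEq, reduceCtorEq]
  fin_cases ℓ <;>
    simp only [Fin.zero_eta, Fin.mk_one, Fin.isValue, zero_ne_one, one_ne_zero, true_and, false_and,
      false_or, or_false] at hole ⊢ <;>
    omega

theorem exists_hasDiff_baseCycle (K : ℕ) (ℓ ℓ' : Fin 2) (d : ℤ) (h0 : 0 ≤ d)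
    (hn : d < 12 * K + 27) (hd : ¬ (ℓ = ℓ' ∧ d = 0))
    (hd3 : ¬ (ℓ = 0 ∧ ℓ' = 0 ∧ (d = 3 ∨ d = 12 * K + 24))) :
    ∃ j, HasDiff (closedEdges (baseCycle K j)) ℓ ℓ' d ∨
      HasDiff (closedEdges (baseCycle K j)) ℓ ℓ' (d - (12 * K + 27)) := by
  -- List the differences of the six cycles: intervals from the zigzags, single values elsewhere.
  simp only [Fin.exists_fin_succ, Fin.reduceSucc, Fin.succ_zero_eq_one, Fin.succ_one_eq_two,
    IsEmpty.exists_iff, baseCycle, closedEdges, pathEdges, take_one_zigzag_append,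
    List.append_assoc, List.cons_append, List.nil_append, hasDiff_pathEdges_zigzag_append,
    pathEdges_cons_zigzag_append, hasDiff_insert, hasDiff_singleton, not_hasDiff_empty,
    not_hasDiff_singleton_none_left, not_hasDiff_singleton_none_right, or_false, false_or]
  fin_cases ℓ <;> fin_cases ℓ' <;>
    simp only [Fin.zero_eta, Fin.mk_one, Fin.isValue, zero_ne_one, one_ne_zero, true_and, false_and,
      and_false, or_false, false_or] at hd hd3 ⊢ <;>
    omega

end BaseCycle

section ModularBaseCycle

theorem exists_intCast_eq {n : ℕ} [NeZero n] (x : ZMod n) :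
    ∃ a : ℤ, 0 ≤ a ∧ a < n ∧ (a : ZMod n) = x :=
  ⟨x.val, Int.natCast_nonneg _, Int.ofNat_lt.2 x.val_lt, by simp⟩

variable (K : ℕ)

/-- The base cycles with coordinates read modulo `3 (4 K + 9)`. -/
def zmodBaseCycle (j : Fin 6) : ZMod (4 * K + 9) → TwoLevel (ZMod ((4 * K + 9) * 3)) :=
  listCycle ((baseCycle K j).map (levelMap Int.cast))
    ((List.length_map _).trans (length_baseCycle K j))

theorem image_closedEdges_subset_cycleEdges_zmodBaseCycle (j : Fin 6) :
    Sym2.map (levelMap Int.cast) '' closedEdges (baseCycle K j) ⊆ cycleEdges (zmodBaseCycle K) := by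
  rw [← closedEdges_map]
  exact closedEdges_subset_cycleEdges_listCycle (k := 4 * K + 9)
    (fun j => (baseCycle K j).map (levelMap Int.cast)) _ j

theorem exists_zmodBaseCycle_eq (v : TwoLevel (ZMod ((4 * K + 9) * 3)))
    (hv : v ≠ some (0, ((10 * K + 23 : ℤ) : ZMod _))) : ∃ j t, zmodBaseCycle K j t = v := by
  obtain ⟨j, w, hw, rfl⟩ : ∃ j, ∃ w ∈ baseCycle K j, levelMap Int.cast w = v := by
    rcases v with _ | ⟨ℓ, x⟩
    · exact ⟨0, none, by simp [baseCycle], rfl⟩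
    · obtain ⟨a, h0, hn, rfl⟩ := exists_intCast_eq x
      obtain ⟨j, hj⟩ := exists_mem_baseCycle K ℓ a h0 (by push_cast at hn; linarith)
        (by rintro ⟨rfl, rfl⟩; exact hv rfl)
      exact ⟨j, some (ℓ, a), hj, rfl⟩
  exact ⟨j, exists_listCycle_eq _ (List.mem_map_of_mem hw)⟩

theorem hasDiff_zmodBaseCycle (ℓ ℓ' : Fin 2) (d : ZMod ((4 * K + 9) * 3))
    (hd : ¬ (ℓ = ℓ' ∧ d = 0)) (hd3 : ¬ (ℓ = 0 ∧ ℓ' = 0 ∧ (d = 3 ∨ d = -3))) :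
    HasDiff (cycleEdges (zmodBaseCycle K)) ℓ ℓ' d := by
  obtain ⟨a, h0, hn, rfl⟩ := exists_intCast_eq d
  have order_eq_zero : ((12 * K + 27 : ℤ) : ZMod ((4 * K + 9) * 3)) = 0 := by
    have := ZMod.natCast_self ((4 * K + 9) * 3)
    push_cast at this ⊢
    linear_combination this
  have ha : ¬ (ℓ = ℓ' ∧ a = 0) := by
    rintro ⟨hℓ, rfl⟩
    exact hd ⟨hℓ, Int.cast_zero⟩
  have ha3 : ¬ (ℓ = 0 ∧ ℓ' = 0 ∧ (a = 3 ∨ a = 12 * K + 24)) := by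
    rintro ⟨hℓ, hℓ', rfl | rfl⟩
    · exact hd3 ⟨hℓ, hℓ', Or.inl (by norm_cast)⟩
    · refine hd3 ⟨hℓ, hℓ', Or.inr ?_⟩
      push_cast at order_eq_zero ⊢
      linear_combination order_eq_zero
  have reduce {j : Fin 6} {x : ℤ} (h : HasDiff (closedEdges (baseCycle K j)) ℓ ℓ' x) :
      HasDiff (cycleEdges (zmodBaseCycle K)) ℓ ℓ' (x : ZMod ((4 * K + 9) * 3)) :=
    (h.map (Int.castAddHom (ZMod ((4 * K + 9) * 3)))).mono
      (image_closedEdges_subset_cycleEdges_zmodBaseCycle K j)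
  obtain ⟨j, h | h⟩ :=
    exists_hasDiff_baseCycle K ℓ ℓ' a h0 (by push_cast at hn; linarith) ha ha3
  · exact reduce h
  · simpa only [Int.cast_sub, order_eq_zero, sub_zero] using reduce h

theorem exists_none_mem_zmodBaseCycle (ℓ : Fin 2) :
    ∃ x, s(none, some (ℓ, x)) ∈ cycleEdges (zmodBaseCycle K) := by
  obtain ⟨x, hx⟩ : ∃ x : ℤ, s(none, some (ℓ, x)) ∈ closedEdges (baseCycle K 0) := by
    simp only [closedEdges, baseCycle, List.append_assoc, List.cons_append]
    fin_cases ℓ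
    · exact ⟨_, pathEdges_cons_subset_zigzag_append _ _ _ _ (Or.inl Sym2.eq_swap)⟩
    · exact ⟨_, pathEdges_cons_subset_zigzag_append _ _ _ _ (Or.inr (Or.inl rfl))⟩
  exact ⟨x, image_closedEdges_subset_cycleEdges_zmodBaseCycle K 0 ⟨_, hx, rfl⟩⟩

theorem isStarter_zmodBaseCycle : IsStarter 3 (zmodBaseCycle K) where
  exists_hole := ⟨_, exists_zmodBaseCycle_eq K⟩
  hasDiff := hasDiff_zmodBaseCycle K
  none_mem := exists_none_mem_zmodBaseCycle K

end ModularBaseCycle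

theorem stmt6 (k : ℕ) (h9 : 9 ≤ k) (hk : k % 4 = 1) : IsARCS k (6 * k + 1) := by
  obtain ⟨K, rfl⟩ : ∃ K, k = 4 * K + 9 := ⟨(k - 9) / 4, by omega⟩
  have order_three : addOrderOf (3 : ZMod ((4 * K + 9) * 3)) = 4 * K + 9 := by
    simpa using ZMod.addOrderOf_coe 3 (n := (4 * K + 9) * 3) (by omega)
  have arcs : IsARCS (4 * K + 9) (2 * ((4 * K + 9) * 3) + 1) :=
    (isStarter_zmodBaseCycle K).isARCS (by omega) (Nat.card_zmod _) (by simp) order_three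
  convert arcs using 1
  ring
end
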